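/- arXiv:2303.18029 — 8 statements merged into one kernel-verified Lean document; each statement's English description precedes it below -/
import Mathlib

section
/- Let G be a finite, simple, connected graph with vertex set V. Then for every S ⊆ V, the set I(S) is a convex set in the all-path convexity, i.e., I(I(S)) = I(S). -/
/-!
The inclusion `I(S) ⊆ I(I(S))` is immediate. For the converse, the heart of the matter is an
endpoint-replacement statement (`mem_or_exists_path_from`): if `v` lies on a path `P` from
`x ∈ I(S)` to an arbitrary vertex `y`, then either `v ∈ I(S)` already, or `v` lies on a path
from some `s ∈ S` to `y`. Replacing first one endpoint and then the other turns a path between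
two vertices of `I(S)` into a path between two vertices of `S`, still passing through `v`.

To replace `x`, take a path `Q` through `x` with both ends in `S`, and assume `v ∉ Q`. Going from
`v` along `P` towards `x`, let `a` be the first vertex of `Q` met. If the part of `P` from `v` to
`y` avoids `Q`, then an initial segment of `Q` up to `a`, followed by the part of `P` from `a`
to `y`, is a path from `S` to `y` through `v`. Otherwise let `b` be the first vertex of `Q` met on
the way from `v` to `y`. Since `a ≠ b`, the path `Q` contains disjoint paths from `a` and from `b`
to `S` (`exists_disjoint_paths`), and gluing these to the part of `P` between `a` and `b` shows
`v ∈ I(S)`.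
-/

/-- The all-path interval of `S`:
`I(S) = S ∪ {v | v lies on some path of G whose two endpoints belong to S}`. -/
def allPathInterval {V : Type*} (G : SimpleGraph V) (S : Set V) : Set V :=
  S ∪ {v | ∃ u ∈ S, ∃ w ∈ S, ∃ p : G.Walk u w, p.IsPath ∧ v ∈ p.support}

namespace AllPath

open SimpleGraph

variable {V : Type*} {G : SimpleGraph V}

lemma isPath_append {u v w : V} {p : G.Walk u v} {q : G.Walk v w} (hp : p.IsPath) (hq : q.IsPath)
    (h : ∀ z ∈ p.support, z ∈ q.support → z = v) : (p.append q).IsPath := by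
  rw [Walk.isPath_def, Walk.support_append, List.nodup_append']
  refine ⟨hp.support_nodup, hq.support_nodup.tail, fun z hz hz' => ?_⟩
  obtain rfl := h z hz (List.mem_of_mem_tail hz')
  have hn := hq.support_nodup
  rw [← Walk.cons_tail_support] at hn
  exact (List.nodup_cons.1 hn).1 hz'

lemma eq_of_mem_append {u v w z : V} {p : G.Walk u v} {q : G.Walk v w}
    (h : (p.append q).IsPath) (hp : z ∈ p.support) (hq : z ∈ q.support) : z = v := by
  by_contra hne
  exact h.ne_of_mem_support_of_append hne hp hq rfl

/-- A path that meets `C` can be cut off at its first vertex in `C`. -/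
lemma exists_first {u w : V} (C : Set V) (p : G.Walk u w) (hp : p.IsPath)
    (hC : ∃ z ∈ p.support, z ∈ C) :
    ∃ c ∈ C, ∃ q : G.Walk u c, q.IsPath ∧ (∀ z ∈ q.support, z ∈ p.support) ∧
      ∀ z ∈ q.support, z ∈ C → z = c := by
  induction p with
  | @nil u =>
    obtain ⟨z, hz, hzC⟩ := hC
    obtain rfl : z = u := by simpa using hz
    exact ⟨z, hzC, .nil, .nil, by simp, by simp⟩
  | @cons u x w h p ih =>
    by_cases hu : u ∈ C
    · exact ⟨u, hu, .nil, .nil, by simp, by simp⟩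
    · rw [Walk.cons_isPath_iff] at hp
      obtain ⟨z, hz, hzC⟩ := hC
      have hz' : z ∈ p.support := by
        rcases List.mem_cons.1 (Walk.support_cons h p ▸ hz) with rfl | hz
        · exact absurd hzC hu
        · exact hz
      obtain ⟨c, hc, q, hq, hqp, hqC⟩ := ih hp.1 ⟨z, hz', hzC⟩
      refine ⟨c, hc, .cons h q, ?_, ?_, ?_⟩
      · exact (Walk.cons_isPath_iff h q).2 ⟨hq, fun hm => hp.2 (hqp _ hm)⟩
      · intro z hz
        rw [Walk.support_cons, List.mem_cons] at hz ⊢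
        exact hz.imp_right (hqp z)
      · intro z hz hzC
        rw [Walk.support_cons, List.mem_cons] at hz
        rcases hz with rfl | hz
        · exact absurd hzC hu
        · exact hqC z hz hzC

/-- From two distinct vertices of a path with both ends in `S`, one can run along that path to `S`
in opposite directions, hence disjointly. -/
lemma exists_disjoint_paths {S : Set V} {s t a b : V} (hs : s ∈ S) (ht : t ∈ S)
    (Q : G.Walk s t) (hQ : Q.IsPath) (ha : a ∈ Q.support) (hb : b ∈ Q.support) (hab : a ≠ b) :
    ∃ a' ∈ S, ∃ b' ∈ S, ∃ (A : G.Walk a' a) (B : G.Walk b b'), A.IsPath ∧ B.IsPath ∧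
      (∀ z ∈ A.support, z ∈ Q.support) ∧ (∀ z ∈ B.support, z ∈ Q.support) ∧
      ∀ z ∈ A.support, z ∉ B.support := by
  obtain ⟨q₁, q₂, h₁, h₂, rfl⟩ := hQ.mem_support_iff_exists_append.1 ha
  rcases (Walk.mem_support_append_iff _ _).1 hb with hb | hb
  · obtain ⟨r₁, r₂, hr₁, hr₂, rfl⟩ := h₁.mem_support_iff_exists_append.1 hb
    refine ⟨t, ht, s, hs, q₂.reverse, r₁.reverse, h₂.reverse, hr₁.reverse, ?_, ?_, ?_⟩
    · simp +contextual
    · simp +contextual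
    · intro z hz hz'
      simp only [Walk.support_reverse, List.mem_reverse] at hz hz'
      obtain rfl : z = a := eq_of_mem_append hQ (by simp [hz']) hz
      exact hab (eq_of_mem_append h₁ hz' (by simp))
  · obtain ⟨r₁, r₂, hr₁, hr₂, rfl⟩ := h₂.mem_support_iff_exists_append.1 hb
    refine ⟨s, hs, t, ht, q₁, r₂, h₁, hr₂, ?_, ?_, ?_⟩
    · simp +contextual
    · simp +contextual
    · intro z hz hz'
      obtain rfl : z = a := eq_of_mem_append hQ hz (by simp [hz'])
      exact hab (eq_of_mem_append h₂ (by simp) hz')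

lemma exists_path_of_mem {S : Set V} {x : V} (hx : x ∈ allPathInterval G S) :
    ∃ s ∈ S, ∃ t ∈ S, ∃ Q : G.Walk s t, Q.IsPath ∧ x ∈ Q.support := by
  rcases hx with hx | hx
  · exact ⟨x, hx, x, hx, .nil, .nil, by simp⟩
  · exact hx

/-- The endpoint `x ∈ I(S)` of a path through `v` can be replaced by a vertex of `S`, unless `v`
is itself in `I(S)`. -/
lemma mem_or_exists_path_from {S : Set V} {x y v : V} (hx : x ∈ allPathInterval G S)
    (P : G.Walk x y) (hP : P.IsPath) (hv : v ∈ P.support) :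
    v ∈ allPathInterval G S ∨ ∃ s ∈ S, ∃ p : G.Walk s y, p.IsPath ∧ v ∈ p.support := by
  obtain ⟨s, hs, t, ht, Q, hQ, hxQ⟩ := exists_path_of_mem hx
  by_cases hvQ : v ∈ Q.support
  · exact .inl (.inr ⟨s, hs, t, ht, Q, hQ, hvQ⟩)
  obtain ⟨P₁, P₂, hP₁, hP₂, rfl⟩ := hP.mem_support_iff_exists_append.1 hv
  obtain ⟨a, ha, R, hR, hRP, hRQ⟩ :=
    exists_first {z | z ∈ Q.support} P₁.reverse hP₁.reverse ⟨x, by simp, hxQ⟩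
  have hRP₂ : ∀ z ∈ R.support, z ∈ P₂.support → z = v := fun z hz hz' =>
    eq_of_mem_append hP (by simpa using hRP z hz) hz'
  by_cases hmeet : ∃ z ∈ P₂.support, z ∈ {z | z ∈ Q.support}
  · left
    obtain ⟨b, hb, T, hT, hTP, hTQ⟩ := exists_first _ P₂ hP₂ hmeet
    have hab : a ≠ b := by
      rintro rfl
      exact hvQ (hRP₂ a (by simp) (hTP a (by simp)) ▸ ha)
    obtain ⟨a', ha', b', hb', A, B, hA, hB, hAQ, hBQ, hAB⟩ :=
      exists_disjoint_paths hs ht Q hQ ha hb hab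
    refine .inr ⟨a', ha', b', hb', A.append (R.reverse.append (T.append B)), ?_, by simp⟩
    refine isPath_append hA (isPath_append hR.reverse (isPath_append hT hB ?_) ?_) ?_
    · exact fun z hz hz' => hTQ z hz (hBQ z hz')
    · intro z hz hz'
      rw [Walk.support_reverse, List.mem_reverse] at hz
      rcases (Walk.mem_support_append_iff _ _).1 hz' with hz' | hz'
      · exact hRP₂ z hz (hTP z hz')
      · obtain rfl := hRQ z hz (hBQ z hz')
        exact absurd hz' (hAB _ (by simp))
    · intro z hz hz'
      simp only [Walk.mem_support_append_iff, Walk.support_reverse, List.mem_reverse] at hz'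
      rcases hz' with hz' | hz' | hz'
      · exact hRQ z hz' (hAQ z hz)
      · obtain rfl := hTQ z hz' (hAQ z hz)
        exact absurd (Walk.start_mem_support B) (hAB _ hz)
      · exact absurd hz' (hAB _ hz)
  · right
    obtain ⟨A, B, hA, -, hAB⟩ := hQ.mem_support_iff_exists_append.1 ha
    have hAQ : ∀ z ∈ A.support, z ∈ Q.support := fun z hz => by simp [hAB, hz]
    refine ⟨s, hs, A.append (R.reverse.append P₂), ?_, by simp⟩
    refine isPath_append hA (isPath_append hR.reverse hP₂ ?_) ?_
    · intro z hz hz'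
      exact hRP₂ z (by simpa using hz) hz'
    · intro z hz hz'
      simp only [Walk.mem_support_append_iff, Walk.support_reverse, List.mem_reverse] at hz'
      rcases hz' with hz' | hz'
      · exact hRQ z hz' (hAQ z hz)
      · exact absurd ⟨z, hz', hAQ z hz⟩ hmeet

end AllPath

/-- In the all-path convexity, `I(S)` is always a convex set. -/
theorem allPathInterval_convex {V : Type*} [Fintype V] (G : SimpleGraph V)
    (hG : G.Connected) (S : Set V) :
    allPathInterval G (allPathInterval G S) = allPathInterval G S := by
  refine Set.Subset.antisymm ?_ Set.subset_union_left
  rintro v (hv | ⟨x, hx, y, hy, P, hP, hv⟩)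
  · exact hv
  rcases AllPath.mem_or_exists_path_from hx P hP hv with h | ⟨s, hs, p, hp, hvp⟩
  · exact h
  -- The other endpoint is replaced by reversing the path.
  rcases AllPath.mem_or_exists_path_from hy p.reverse hp.reverse (by simpa using hvp) with
    h | ⟨t, ht, q, hq, hvq⟩
  · exact h
  · exact .inr ⟨t, ht, s, hs, q, hq, hvq⟩
end

section
/- Let G be a finite, simple, connected graph with vertex set V. Then in the all-path convexity, H(S) = I(S) for every S ⊆ V, where H(S) is the convex hull of S, i.e., the intersection of all convex sets containing S. -/
/-- The convex hull of `S` in the all-path convexity: the intersection of all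
convex sets containing `S`. -/
def allPathHull {V : Type*} (G : SimpleGraph V) (S : Set V) : Set V :=
  ⋂₀ {C : Set V | allPathInterval G C = C ∧ S ⊆ C}

/-- There are a walk from `v` to `y` and a walk from `v` to `S` having only `v` in common.
Walks rather than paths are used, since they can be shortened to paths at the end. -/
def HasFan {V : Type*} (G : SimpleGraph V) (S : Set V) (v y : V) : Prop :=
  ∃ A : G.Walk v y, ∃ s ∈ S, ∃ B : G.Walk v s, ∀ x ∈ A.support, x ∈ B.support → x = v

/-- The final piece of a walk, starting at its last visit to the set `X`. -/
lemma exists_last_visit {V : Type*} {G : SimpleGraph V} (X : Set V) {a b : V} (R : G.Walk a b)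
    (h : ∃ z ∈ R.support, z ∈ X) :
    ∃ z ∈ X, ∃ Q : G.Walk z b, (∀ x ∈ Q.support, x ∈ R.support) ∧
      ∀ x ∈ Q.support, x ∈ X → x = z := by
  induction R with
  | nil =>
    obtain ⟨z, hz, hzX⟩ := h
    simp only [SimpleGraph.Walk.support_nil, List.mem_singleton] at hz
    subst hz
    exact ⟨z, hzX, .nil, by simp, by simp⟩
  | @cons u w b e p ih =>
    by_cases hp : ∃ z ∈ p.support, z ∈ X
    · obtain ⟨z, hz, Q, hQ, hQX⟩ := ih hp
      exact ⟨z, hz, Q, fun x hx => by simp [hQ x hx], hQX⟩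
    · obtain ⟨z, hz, hzX⟩ := h
      have hzu : z = u := by
        rcases List.mem_cons.1 (SimpleGraph.Walk.support_cons e p ▸ hz) with h | h
        · exact h
        · exact absurd ⟨z, h, hzX⟩ hp
      subst hzu
      refine ⟨z, hzX, .cons e p, fun x hx => hx, fun x hx hxX => ?_⟩
      rcases List.mem_cons.1 (SimpleGraph.Walk.support_cons e p ▸ hx) with h | h
      · exact h
      · exact absurd ⟨x, h, hxX⟩ hp

/-- A single vertex `x ≠ v` does not separate a vertex `v` of the interval of `T` from `T`. -/
lemma exists_walk_avoiding {V : Type*} {G : SimpleGraph V} {T : Set V} {v x : V}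
    (hv : v ∈ allPathInterval G T) (hx : x ≠ v) :
    ∃ t ∈ T, ∃ p : G.Walk v t, x ∉ p.support := by
  classical
  rcases hv with hv | ⟨u, hu, w, hw, p, hp, hvp⟩
  · exact ⟨v, hv, .nil, by simpa using hx⟩
  · by_cases h1 : x ∈ (p.takeUntil v hvp).support
    · refine ⟨w, hw, p.dropUntil v hvp, fun h2 => ?_⟩
      have hnd := hp.support_nodup
      rw [← p.take_spec hvp, SimpleGraph.Walk.support_append] at hnd
      have h3 : x ∈ (p.dropUntil v hvp).support.tail := by
        rw [← SimpleGraph.Walk.cons_tail_support] at h2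
        exact (List.mem_cons.1 h2).resolve_left hx
      exact (List.nodup_append.1 hnd).2.2 x h1 x h3 rfl
    · exact ⟨u, hu, (p.takeUntil v hvp).reverse, by simpa using h1⟩

/-- Augmentation step: if no vertex `x ≠ v` separates `v` from `S`, fans propagate along edges. -/
lemma HasFan.step {V : Type*} {G : SimpleGraph V} {S : Set V} {v p y : V}
    (h : ∀ x, x ≠ v → ∃ s ∈ S, ∃ q : G.Walk v s, x ∉ q.support)
    (hp : HasFan G S v p) (hpy : G.Adj p y) (hy : y ≠ v) : HasFan G S v y := by
  classical
  obtain ⟨A, s, hs, B, hAB⟩ := hp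
  by_cases hyA : y ∈ A.support
  · exact ⟨A.takeUntil y hyA, s, hs, B,
      fun x hx => hAB x (A.support_takeUntil_subset_support hyA hx)⟩
  by_cases hyB : y ∈ B.support
  · -- `B` is cut at `y`; a walk `R` to `S` avoiding `y` is used from its last visit `z`
    -- to `A` or the remaining part of `B`.
    obtain ⟨t, ht, R, hR⟩ := h y hy
    obtain ⟨z, hz, Q, hQR, hQ⟩ := exists_last_visit
      {x | x ∈ A.support ∨ x ∈ (B.takeUntil y hyB).support} R ⟨v, by simp, by simp⟩
    have hyQ : y ∉ Q.support := fun h => hR (hQR y h)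
    have hsub : ∀ x ∈ (B.takeUntil y hyB).support, x ∈ B.support :=
      fun x hx => B.support_takeUntil_subset_support hyB hx
    rcases hz with hzA | hzB
    · refine ⟨B.takeUntil y hyB, t, ht, (A.takeUntil z hzA).append Q, fun x hx hx' => ?_⟩
      rcases SimpleGraph.Walk.mem_support_append_iff _ _ |>.1 hx' with h1 | h1
      · exact hAB x (A.support_takeUntil_subset_support hzA h1) (hsub x hx)
      · have hxz := hQ x h1 (Or.inr hx)
        exact hAB x (hxz ▸ hzA) (hsub x hx)
    · have hyz : y ≠ z := fun e => hyQ (e ▸ Q.start_mem_support)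
      refine ⟨A.concat hpy, t, ht, ((B.takeUntil y hyB).takeUntil z hzB).append Q,
        fun x hx hx' => ?_⟩
      rw [SimpleGraph.Walk.support_concat, List.mem_append, List.mem_singleton] at hx
      rcases SimpleGraph.Walk.mem_support_append_iff _ _ |>.1 hx' with h1 | h1
      · rcases hx with hx | rfl
        · exact hAB x hx (hsub x (SimpleGraph.Walk.support_takeUntil_subset_support _ hzB h1))
        · rw [SimpleGraph.Walk.takeUntil_takeUntil] at h1
          exact absurd h1
            (SimpleGraph.Walk.notMem_support_takeUntil_support_takeUntil_subset hyz.symm hyB hzB)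
      · rcases hx with hx | rfl
        · have hxz := hQ x h1 (Or.inl hx)
          exact hAB x hx (hxz ▸ hsub z hzB)
        · exact absurd h1 hyQ
  · refine ⟨A.concat hpy, s, hs, B, fun x hx hxB => ?_⟩
    rw [SimpleGraph.Walk.support_concat, List.mem_append, List.mem_singleton] at hx
    rcases hx with hx | rfl
    · exact hAB x hx hxB
    · exact absurd hxB hyB

/-- If `S` is nonempty and no vertex `x ≠ v` separates `v` from `S`,
then `v` lies in the interval of `S`. -/
lemma mem_interval_of_forall_avoiding {V : Type*} {G : SimpleGraph V} (hG : G.Connected)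
    {S : Set V} {v : V}
    (h : ∀ x, x ≠ v → ∃ s ∈ S, ∃ q : G.Walk v s, x ∉ q.support) (hS : S.Nonempty) :
    v ∈ allPathInterval G S := by
  classical
  by_cases hvS : v ∈ S
  · exact Or.inl hvS
  have key : ∀ {a b : V}, G.Walk a b → (a = v ∨ HasFan G S v a) → (b = v ∨ HasFan G S v b) := by
    intro a b W
    induction W with
    | nil => exact id
    | @cons a c b e W ih =>
      intro ha
      refine ih ?_
      by_cases hc : c = v
      · exact Or.inl hc
      · refine Or.inr ?_
        rcases ha with rfl | ha
        · -- For a neighbour `c` of `v`, the edge and a walk to `S` avoiding `c` form a fan.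
          obtain ⟨s, hs, q, hq⟩ := h c hc
          refine ⟨e.toWalk, s, hs, q, fun x hx hxq => ?_⟩
          simp only [SimpleGraph.Walk.support_cons, SimpleGraph.Walk.support_nil,
            List.mem_cons, List.not_mem_nil, or_false] at hx
          rcases hx with rfl | rfl
          · rfl
          · exact absurd hxq hq
        · exact ha.step h e hc
  obtain ⟨t, ht⟩ := hS
  obtain ⟨W⟩ := hG.preconnected v t
  rcases key W (Or.inl rfl) with rfl | ⟨A, s, hs, B, hAB⟩
  · exact absurd ht hvS
  refine Or.inr ⟨t, ht, s, hs, A.bypass.reverse.append B.bypass, ?_, ?_⟩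
  · rw [SimpleGraph.Walk.isPath_def, SimpleGraph.Walk.support_append]
    have hB := B.bypass_isPath.support_nodup
    rw [← SimpleGraph.Walk.cons_tail_support, List.nodup_cons] at hB
    refine List.nodup_append.2 ⟨A.bypass_isPath.reverse.support_nodup, hB.2, ?_⟩
    rintro x hx y hy rfl
    have hxA : x ∈ A.support := A.support_bypass_subset_support (by simpa using hx)
    have hxB : x ∈ B.support := B.support_bypass_subset_support (List.mem_of_mem_tail hy)
    exact hB.1 (hAB x hxA hxB ▸ hy)
  · simp [SimpleGraph.Walk.mem_support_append_iff]

lemma allPathInterval_idem {V : Type*} {G : SimpleGraph V} (hG : G.Connected) (S : Set V) :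
    allPathInterval G (allPathInterval G S) = allPathInterval G S := by
  refine Set.Subset.antisymm (fun v hv => ?_) Set.subset_union_left
  refine mem_interval_of_forall_avoiding hG (fun x hx => ?_) ?_
  · obtain ⟨u, hu, p, hp⟩ := exists_walk_avoiding hv hx
    obtain ⟨s, hs, q, hq⟩ := exists_walk_avoiding hu
      (fun e : x = u => hp (e ▸ p.end_mem_support))
    exact ⟨s, hs, p.append q, fun h =>
      (SimpleGraph.Walk.mem_support_append_iff _ _ |>.1 h).elim hp hq⟩
  · rcases hv with (hv | ⟨u, hu, -⟩) | ⟨u, hu | ⟨w, hw, -⟩, -⟩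
    exacts [⟨v, hv⟩, ⟨u, hu⟩, ⟨u, hu⟩, ⟨w, hw⟩]

lemma allPathInterval_mono {V : Type*} {G : SimpleGraph V} {S T : Set V} (h : S ⊆ T) :
    allPathInterval G S ⊆ allPathInterval G T := by
  rintro v (hv | ⟨u, hu, w, hw, p⟩)
  · exact Or.inl (h hv)
  · exact Or.inr ⟨u, h hu, w, h hw, p⟩

/-- In the all-path convexity, `H(S) = I(S)` for every `S ⊆ V`. -/
theorem allPathHull_eq_interval {V : Type*} [Fintype V] (G : SimpleGraph V)
    (hG : G.Connected) (S : Set V) :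
    allPathHull G S = allPathInterval G S := by
  refine Set.Subset.antisymm ?_ ?_
  · exact Set.sInter_subset_of_mem ⟨allPathInterval_idem hG S, Set.subset_union_left⟩
  · rintro v hv C ⟨hC, hSC⟩
    exact hC ▸ allPathInterval_mono hSC hv
end

section
/- Let G be a finite, simple, connected graph with vertex set V. Then G is interval monotone with respect to the all-path convexity: for every S ⊆ V, the convex hull of S is reached after a single application of the interval function, i.e., I^2(S) = I(S) = H(S) for all S ⊆ V (so the geodetic iteration number of G satisfies gin(G) ≤ 1). -/
namespace AllPath

open SimpleGraph

variable {V : Type*} {G : SimpleGraph V} {S : Set V}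

theorem isPath_append_iff {u v w : V} (p : G.Walk u v) (q : G.Walk v w) :
    (p.append q).IsPath ↔
      p.IsPath ∧ q.IsPath ∧ ∀ z, z ∈ p.support → z ∈ q.support → z = v := by
  constructor
  · intro h
    refine ⟨h.of_append_left, h.of_append_right, fun z hz hz' => ?_⟩
    by_contra hne
    exact h.ne_of_mem_support_of_append hne hz hz' rfl
  · rintro ⟨hp, hq, h⟩
    rw [Walk.isPath_def, Walk.support_append]
    have hq' := hq.support_nodup
    rw [← Walk.cons_tail_support, List.nodup_cons] at hq'
    refine List.Nodup.append hp.support_nodup hq'.2 fun z hz hz' => ?_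
    have := h z hz (List.mem_of_mem_tail hz')
    subst this
    exact hq'.1 hz'

theorem mem_of_arms {x a b z : V} (ha : a ∈ S) (hb : b ∈ S) {p : G.Walk x a} {q : G.Walk x b}
    (hp : p.IsPath) (hq : q.IsPath) (hpq : ∀ z, z ∈ p.support → z ∈ q.support → z = x)
    (hz : z ∈ p.support ∨ z ∈ q.support) : z ∈ allPathInterval G S := by
  refine Or.inr ⟨a, ha, b, hb, p.reverse.append q, ?_, ?_⟩
  · rw [isPath_append_iff]
    refine ⟨hp.reverse, hq, fun z hz hz' => hpq z (by simpa using hz) hz'⟩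
  · simpa [Walk.mem_support_append_iff] using hz

/-- A vertex is in `I(S)` iff it is the start of two paths to `S` sharing no other vertex.
For a vertex of `S` both paths may be trivial. -/
theorem mem_allPathInterval_iff_arms {x : V} :
    x ∈ allPathInterval G S ↔ ∃ a ∈ S, ∃ b ∈ S, ∃ (p : G.Walk x a) (q : G.Walk x b),
      p.IsPath ∧ q.IsPath ∧ ∀ z, z ∈ p.support → z ∈ q.support → z = x := by
  constructor
  · rintro (hx | ⟨a, ha, b, hb, r, hr, hx⟩)
    · exact ⟨x, hx, x, hx, .nil, .nil, .nil, .nil, by simp⟩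
    · obtain ⟨p, q, rfl⟩ := r.mem_support_iff_exists_append.mp hx
      obtain ⟨hp, hq, h⟩ := (isPath_append_iff p q).mp hr
      exact ⟨a, ha, b, hb, p.reverse, q, hp.reverse, hq,
        fun z hz hz' => h z (by simpa using hz) hz'⟩
  · rintro ⟨a, ha, b, hb, p, q, hp, hq, hpq⟩
    exact mem_of_arms ha hb hp hq hpq (Or.inl p.start_mem_support)

theorem exists_path_avoiding {x y : V} (hy : y ∈ allPathInterval G S) (hxy : x ≠ y) :
    ∃ c ∈ S, ∃ r : G.Walk y c, r.IsPath ∧ x ∉ r.support ∧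
      ∀ z ∈ r.support, z ∈ allPathInterval G S := by
  obtain ⟨a, ha, b, hb, p, q, hp, hq, hpq⟩ := mem_allPathInterval_iff_arms.mp hy
  by_cases hx : x ∈ p.support
  · exact ⟨b, hb, q, hq, fun h => hxy (hpq x hx h),
      fun z hz => mem_of_arms ha hb hp hq hpq (Or.inr hz)⟩
  · exact ⟨a, ha, p, hp, hx, fun z hz => mem_of_arms ha hb hp hq hpq (Or.inl hz)⟩

/-- The rerouting step when `y` lies on the arm `p` of `x`: keep the arm `q` for `x`, and let `y`
follow `p` away from `x`. -/
theorem exists_disjoint_paths_of_mem_arm {x a b y : V} (ha : a ∈ S) (hb : b ∈ S)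
    {p : G.Walk x a} {q : G.Walk x b} (hp : p.IsPath) (hq : q.IsPath)
    (hpq : ∀ z, z ∈ p.support → z ∈ q.support → z = x) (hxy : x ≠ y) (hy : y ∈ p.support) :
    ∃ s ∈ S, ∃ t ∈ S, ∃ (A : G.Walk x s) (B : G.Walk y t), A.IsPath ∧ B.IsPath ∧
      (∀ z ∈ A.support, z ∉ B.support) ∧
      (∀ z ∈ A.support, z ∈ p.support ∨ z ∈ q.support) ∧
      (∀ z ∈ B.support, z ∈ p.support ∨ z ∈ q.support) := by
  obtain ⟨p₁, p₂, rfl⟩ := p.mem_support_iff_exists_append.mp hy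
  obtain ⟨-, hp₂, h⟩ := (isPath_append_iff p₁ p₂).mp hp
  have hsub : ∀ z ∈ p₂.support, z ∈ (p₁.append p₂).support := fun z hz =>
    (Walk.mem_support_append_iff _ _).mpr (Or.inr hz)
  refine ⟨b, hb, a, ha, q, p₂, hq, hp₂, fun z hz hz' => ?_, fun z hz => Or.inr hz,
    fun z hz => Or.inl (hsub z hz)⟩
  have hzx := hpq z (hsub z hz') hz
  subst hzx
  exact hxy (h z p₁.start_mem_support hz')

/-- Given two arms `p`, `q` at `x` and a path `r` from `y` to `S` avoiding `x`, there are disjoint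
paths from `x` and `y` to `S` using only vertices of `p`, `q` and `r`. -/
theorem exists_disjoint_paths_of_arms {x a b y c : V} (ha : a ∈ S) (hb : b ∈ S) (hc : c ∈ S)
    {p : G.Walk x a} {q : G.Walk x b} (hp : p.IsPath) (hq : q.IsPath)
    (hpq : ∀ z, z ∈ p.support → z ∈ q.support → z = x)
    (r : G.Walk y c) (hr : r.IsPath) (hx : x ∉ r.support) :
    ∃ s ∈ S, ∃ t ∈ S, ∃ (A : G.Walk x s) (B : G.Walk y t), A.IsPath ∧ B.IsPath ∧
      (∀ z ∈ A.support, z ∉ B.support) ∧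
      (∀ z ∈ A.support, z ∈ p.support ∨ z ∈ q.support) ∧
      (∀ z ∈ B.support, z ∈ p.support ∨ z ∈ q.support ∨ z ∈ r.support) := by
  -- Induction on `r` locates its first vertex on one of the arms.
  induction r with
  | @nil y =>
    have hxy : x ≠ y := by simpa using hx
    by_cases hyp : y ∈ p.support
    · refine ⟨b, hb, y, hc, q, .nil, hq, .nil, ?_, by tauto, by simp⟩
      intro z hz hz'
      have hzy : z = y := by simpa using hz'
      subst hzy
      exact hxy (hpq z hyp hz).symm
    · refine ⟨a, ha, y, hc, p, .nil, hp, .nil, ?_, by tauto, by simp⟩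
      intro z hz hz'
      have hzy : z = y := by simpa using hz'
      exact hyp (hzy ▸ hz)
  | @cons y y' c hadj r ih =>
    rw [Walk.cons_isPath_iff] at hr
    rw [Walk.support_cons, List.mem_cons, not_or] at hx
    by_cases hyp : y ∈ p.support
    · obtain ⟨s, hs, t, ht, A, B, hA, hB, hAB, hA', hB'⟩ :=
        exists_disjoint_paths_of_mem_arm ha hb hp hq hpq hx.1 hyp
      exact ⟨s, hs, t, ht, A, B, hA, hB, hAB, hA', fun z hz => by have := hB' z hz; tauto⟩
    by_cases hyq : y ∈ q.support
    · obtain ⟨s, hs, t, ht, A, B, hA, hB, hAB, hA', hB'⟩ :=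
        exists_disjoint_paths_of_mem_arm hb ha hq hp (fun z h h' => hpq z h' h) hx.1 hyq
      exact ⟨s, hs, t, ht, A, B, hA, hB, hAB, fun z hz => (hA' z hz).symm,
        fun z hz => by have := hB' z hz; tauto⟩
    obtain ⟨s, hs, t, ht, A, B, hA, hB, hAB, hA', hB'⟩ := ih hc hr.1 hx.2
    refine ⟨s, hs, t, ht, A, .cons hadj B, hA, ?_, ?_, hA', ?_⟩
    · rw [Walk.cons_isPath_iff]
      refine ⟨hB, fun h => ?_⟩
      have := hB' y h
      tauto
    · intro z hz hz'
      rw [Walk.support_cons, List.mem_cons] at hz'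
      rcases hz' with rfl | hz'
      · have := hA' z hz
        tauto
      · exact hAB z hz hz'
    · intro z hz
      rw [Walk.support_cons, List.mem_cons] at hz ⊢
      rcases hz with h | h
      · exact Or.inr (Or.inr (Or.inl h))
      · have := hB' z h
        tauto

/-- A path from `v` to a vertex of `C` can be stopped at its first vertex in `C`. -/
theorem exists_path_to_first {C : Set V} {v y : V} (r : G.Walk v y) (hr : r.IsPath) (hy : y ∈ C) :
    ∃ x ∈ C, ∃ p : G.Walk v x, p.IsPath ∧ (∀ z ∈ p.support, z ∈ r.support) ∧
      ∀ z ∈ p.support, z ∈ C → z = x := by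
  induction r with
  | @nil v => exact ⟨v, hy, .nil, .nil, by simp, by simp⟩
  | @cons v v' y hadj r ih =>
    rw [Walk.cons_isPath_iff] at hr
    by_cases hv : v ∈ C
    · exact ⟨v, hv, .nil, .nil, by simp, by simp⟩
    obtain ⟨x, hx, p, hp, hpr, hpC⟩ := ih hr.1 hy
    refine ⟨x, hx, .cons hadj p, ?_, ?_, ?_⟩
    · rw [Walk.cons_isPath_iff]
      exact ⟨hp, fun h => hr.2 (hpr v h)⟩
    · intro z hz
      rw [Walk.support_cons, List.mem_cons] at hz ⊢
      exact hz.imp_right (hpr z)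
    · intro z hz hzC
      rw [Walk.support_cons, List.mem_cons] at hz
      rcases hz with rfl | hz
      · exact absurd hzC hv
      · exact hpC z hz hzC

/-- `I(S)` is convex. -/
theorem allPathInterval_idem :
    allPathInterval G (allPathInterval G S) = allPathInterval G S := by
  refine Set.Subset.antisymm (fun v hv => ?_) Set.subset_union_left
  by_contra hvS
  obtain ⟨x', hx', y', hy', p', q', hp', hq', hpq'⟩ := mem_allPathInterval_iff_arms.mp hv
  obtain ⟨x, hx, p, hp, hpp', hpC⟩ := exists_path_to_first p' hp' hx'
  obtain ⟨y, hy, q, hq, hqq', hqC⟩ := exists_path_to_first q' hq' hy'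
  have hpq : ∀ z, z ∈ p.support → z ∈ q.support → z = v := fun z h h' =>
    hpq' z (hpp' z h) (hqq' z h')
  have hxy : x ≠ y := by
    rintro rfl
    have := hpq x p.end_mem_support q.end_mem_support
    exact hvS (this ▸ hx)
  obtain ⟨a, ha, b, hb, p₁, q₁, hp₁, hq₁, hpq₁⟩ := mem_allPathInterval_iff_arms.mp hx
  obtain ⟨c, hc, r, hr, hxr, hrS⟩ := exists_path_avoiding hy hxy
  obtain ⟨s, hs, t, ht, A, B, hA, hB, hAB, hA', hB'⟩ :=
    exists_disjoint_paths_of_arms ha hb hc hp₁ hq₁ hpq₁ r hr hxr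
  have hAS : ∀ z ∈ A.support, z ∈ allPathInterval G S := fun z hz =>
    mem_of_arms ha hb hp₁ hq₁ hpq₁ (hA' z hz)
  have hBS : ∀ z ∈ B.support, z ∈ allPathInterval G S := fun z hz => by
    rcases hB' z hz with h | h | h
    · exact mem_of_arms ha hb hp₁ hq₁ hpq₁ (Or.inl h)
    · exact mem_of_arms ha hb hp₁ hq₁ hpq₁ (Or.inr h)
    · exact hrS z h
  -- The extended paths `v → x → s` and `v → y → t` are arms at `v`, so `v ∈ I(S)`.
  refine hvS (mem_allPathInterval_iff_arms.mpr
    ⟨s, hs, t, ht, p.append A, q.append B, ?_, ?_, ?_⟩)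
  · exact (isPath_append_iff _ _).mpr ⟨hp, hA, fun z h h' => hpC z h (hAS z h')⟩
  · exact (isPath_append_iff _ _).mpr ⟨hq, hB, fun z h h' => hqC z h (hBS z h')⟩
  · intro z h h'
    rw [Walk.mem_support_append_iff] at h h'
    rcases h with h | h <;> rcases h' with h' | h'
    · exact hpq z h h'
    · have hzx := hpC z h (hBS z h')
      subst hzx
      exact absurd h' (hAB z A.start_mem_support)
    · have hzy := hqC z h' (hAS z h)
      subst hzy
      exact absurd B.start_mem_support (hAB z h)
    · exact absurd h' (hAB z h)

theorem allPathInterval_mono {T : Set V} (h : S ⊆ T) :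
    allPathInterval G S ⊆ allPathInterval G T :=
  Set.union_subset_union h fun _ ⟨u, hu, w, hw, p, hp⟩ => ⟨u, h hu, w, h hw, p, hp⟩

end AllPath

/-- Every graph is interval monotone with respect to the all-path convexity:
`I²(S) = I(S) = H(S)` for every `S`, so `gin(G) ≤ 1`. -/
theorem allPath_interval_monotone {V : Type*} [Fintype V] (G : SimpleGraph V)
    (hG : G.Connected) :
    ∀ S : Set V,
      allPathInterval G (allPathInterval G S) = allPathInterval G S ∧
      allPathInterval G S = allPathHull G S := by
  intro S
  refine ⟨AllPath.allPathInterval_idem, Set.Subset.antisymm ?_ ?_⟩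
  · exact Set.subset_sInter fun C hC => (AllPath.allPathInterval_mono hC.2).trans hC.1.subset
  · exact Set.sInter_subset_of_mem ⟨AllPath.allPathInterval_idem, Set.subset_union_left⟩
end

section
/- Let G be a finite, simple, 2-connected graph with vertex set V of size at least 3. Then for every pair of distinct vertices u, w of G and every vertex v with v ∉ {u, w}, there exists a path in G from u to w passing through v. -/
/-!
For fixed `u ≠ w`, the property "some `u`-`w` path contains `x`" passes from a vertex `a` to each of
its neighbours `b`; it holds for `x = u`, so by connectivity it holds everywhere.

For the propagation step (`exists_isPath_mem_of_adj`), let `P` be a `u`-`w` path through `a` that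
misses `b`. Since `u ≠ w`, `P` has a vertex other than `a`, and since `G - a` is connected, there is
a path `R` avoiding `a` from `b` to some `x ≠ a` on `P` that meets `P` only in `x`. Replacing
the segment of `P` between `a` and `x` by the edge `ab` followed by `R` gives a `u`-`w` path
through `b` (`exists_isPath_detour`).
-/

/-- `G` is 2-connected: it is connected and deleting any single vertex
leaves a connected graph. -/
def TwoConnected {V : Type*} (G : SimpleGraph V) : Prop :=
  G.Connected ∧ ∀ z : V, (G.induce ({z}ᶜ : Set V)).Connected

open SimpleGraph

theorem isPath_append_of_inter {V : Type*} {G : SimpleGraph V} {u v w : V}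
    {p : G.Walk u v} {q : G.Walk v w} (hp : p.IsPath) (hq : q.IsPath)
    (h : ∀ z ∈ p.support, z ∈ q.support → z = v) : (p.append q).IsPath := by
  rw [Walk.isPath_def, Walk.support_append]
  have hq' := hq.support_nodup
  rw [← Walk.cons_tail_support, List.nodup_cons] at hq'
  refine List.Nodup.append hp.support_nodup hq'.2 fun z hz hz' => hq'.1 ?_
  exact h z hz (List.mem_of_mem_tail hz') ▸ hz'

theorem eq_of_mem_of_isPath_append {V : Type*} {G : SimpleGraph V} {u v w z : V}
    {p : G.Walk u v} {q : G.Walk v w} (h : (p.append q).IsPath)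
    (hp : z ∈ p.support) (hq : z ∈ q.support) : z = v := by
  by_contra hz
  exact h.ne_of_mem_support_of_append hz hp hq rfl

/-- A walk from `b` that ends in `S` contains a path from `b` to the first vertex of `S` it
reaches. -/
theorem exists_isPath_first_mem {V : Type*} {G : SimpleGraph V} (S : Set V) {b y : V}
    (q : G.Walk b y) (hy : y ∈ S) :
    ∃ x ∈ S, ∃ r : G.Walk b x, r.IsPath ∧ (∀ z ∈ r.support, z ∈ S → z = x) ∧
      r.support ⊆ q.support := by
  classical
  suffices H : ∃ x ∈ S, ∃ r : G.Walk b x, (∀ z ∈ r.support, z ∈ S → z = x) ∧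
      r.support ⊆ q.support by
    obtain ⟨x, hx, r, hr, hrq⟩ := H
    exact ⟨x, hx, r.bypass, r.bypass_isPath,
      fun z hz => hr z (r.support_bypass_subset_support hz),
      fun z hz => hrq (r.support_bypass_subset_support hz)⟩
  induction q with
  | nil => exact ⟨_, hy, .nil, by simp, by simp⟩
  | @cons b c y h q ih =>
    by_cases hb : b ∈ S
    · exact ⟨b, hb, .nil, by simp, by simp⟩
    · obtain ⟨x, hx, r, hr, hrq⟩ := ih hy
      refine ⟨x, hx, .cons h r, ?_, ?_⟩
      · intro z hz hzS
        rw [Walk.support_cons, List.mem_cons] at hz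
        rcases hz with rfl | hz
        · exact absurd hzS hb
        · exact hr z hz hzS
      · rw [Walk.support_cons, Walk.support_cons]
        exact List.cons_subset_cons _ hrq

/-- The segment `m` from `a` to `x` of a path is replaced by the edge `ab` followed by `r`. -/
theorem exists_isPath_detour {V : Type*} {G : SimpleGraph V} {u w a b x : V}
    {p : G.Walk u a} {m : G.Walk a x} {q : G.Walk x w} (hP : (p.append (m.append q)).IsPath)
    (hax : x ≠ a) (hab : G.Adj a b) {r : G.Walk b x} (hr : r.IsPath) (har : a ∉ r.support)
    (hrP : ∀ z ∈ r.support, z ∈ (p.append (m.append q)).support → z = x) :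
    ∃ p' : G.Walk u w, p'.IsPath ∧ b ∈ p'.support := by
  have hmq := hP.of_append_right
  have hrq : (r.append q).IsPath := isPath_append_of_inter hr hmq.of_append_right
    fun z hz hz' => hrP z hz (by simp [Walk.mem_support_append_iff, hz'])
  have haq : a ∉ q.support := fun h =>
    hax (eq_of_mem_of_isPath_append hmq m.start_mem_support h).symm
  refine ⟨p.append (.cons hab (r.append q)),
    isPath_append_of_inter hP.of_append_left (hrq.cons ?_) ?_, ?_⟩
  · simp [Walk.mem_support_append_iff, har, haq]
  · intro z hz hz'
    rw [Walk.support_cons, List.mem_cons, Walk.mem_support_append_iff] at hz'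
    rcases hz' with hz' | hz' | hz'
    · exact hz'
    · obtain rfl := hrP z hz' (by simp [Walk.mem_support_append_iff, hz])
      exact eq_of_mem_of_isPath_append hP hz (by simp [Walk.mem_support_append_iff])
    · exact eq_of_mem_of_isPath_append hP hz (by simp [Walk.mem_support_append_iff, hz'])
  · simp [Walk.mem_support_append_iff]

theorem exists_isPath_mem_of_adj {V : Type*} {G : SimpleGraph V}
    (hG : ∀ z : V, (G.induce ({z}ᶜ : Set V)).Connected) {u w a b : V} (huw : u ≠ w)
    (hab : G.Adj a b) (h : ∃ p : G.Walk u w, p.IsPath ∧ a ∈ p.support) :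
    ∃ p : G.Walk u w, p.IsPath ∧ b ∈ p.support := by
  obtain ⟨P, hP, haP⟩ := h
  obtain ⟨y, hyP, hya⟩ : ∃ y ∈ P.support, y ≠ a := by
    by_cases hu : u = a
    · exact ⟨w, P.end_mem_support, fun hw => huw (hu.trans hw.symm)⟩
    · exact ⟨u, P.start_mem_support, hu⟩
  obtain ⟨q, haq⟩ : ∃ q : G.Walk b y, a ∉ q.support := by
    obtain ⟨q⟩ := (hG a).preconnected ⟨b, by simpa using hab.ne'⟩ ⟨y, by simpa using hya⟩
    refine ⟨q.map (Embedding.induce _).toHom, fun ha => ?_⟩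
    obtain ⟨z, -, hz⟩ := List.mem_map.mp ((Walk.support_map (Embedding.induce _).toHom q) ▸ ha)
    exact z.2 hz
  obtain ⟨x, hxP, r, hr, hrP, hrq⟩ := exists_isPath_first_mem {z | z ∈ P.support} q hyP
  have har : a ∉ r.support := fun h => haq (hrq h)
  have hxa : x ≠ a := by
    rintro rfl
    exact har r.end_mem_support
  simp only [Set.mem_ofPred_eq] at hxP hrP
  obtain ⟨p₁, p₂, rfl⟩ := Walk.mem_support_iff_exists_append.mp hxP
  rcases (Walk.mem_support_append_iff _ _).mp haP with ha | ha
  · obtain ⟨p, m, rfl⟩ := Walk.mem_support_iff_exists_append.mp ha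
    rw [← Walk.append_assoc] at hP hrP
    exact exists_isPath_detour hP hxa hab hr har hrP
  · -- Here `x` precedes `a`; the detour is taken along the reversed path.
    obtain ⟨m, p, rfl⟩ := Walk.mem_support_iff_exists_append.mp ha
    have e : (p₁.append (m.append p)).reverse =
        p.reverse.append (m.reverse.append p₁.reverse) := by
      simp [Walk.reverse_append, Walk.append_assoc]
    obtain ⟨p', hp', hb⟩ := exists_isPath_detour (e ▸ hP.reverse) hxa hab hr har
      (fun z hz hz' => hrP z hz (by rwa [← e, Walk.support_reverse, List.mem_reverse] at hz'))
    exact ⟨p'.reverse, hp'.reverse, by simpa using hb⟩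

/-- Fan Lemma for 2-connected graphs: for distinct `u, w` and any `v ∉ {u, w}`,
there is a path from `u` to `w` passing through `v`. -/
theorem twoConnected_path_through {V : Type*} [Fintype V] (G : SimpleGraph V)
    (hG : TwoConnected G) (hcard : 3 ≤ Fintype.card V)
    (u w v : V) (huw : u ≠ w) (hvu : v ≠ u) (hvw : v ≠ w) :
    ∃ p : G.Walk u w, p.IsPath ∧ v ∈ p.support := by
  obtain ⟨P, hP⟩ := hG.1.exists_isPath u w
  have key : ∀ {a b : V} (_ : G.Walk a b), (∃ p : G.Walk u w, p.IsPath ∧ a ∈ p.support) →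
      ∃ p : G.Walk u w, p.IsPath ∧ b ∈ p.support := by
    intro a b q
    induction q with
    | nil => exact id
    | cons hab _ ih => exact fun h => ih (exists_isPath_mem_of_adj hG.2 huw hab h)
  obtain ⟨q⟩ := hG.1.preconnected u v
  exact key q ⟨P, hP, P.start_mem_support⟩
end

section
/- Let G be a finite, simple, 2-connected graph with vertex set V of size at least 3. Then in the all-path convexity, every convex set S with 2 ≤ |S| satisfies S = V; equivalently, the only convex sets of G are the empty set, the singletons, and V, so the convexity number of G is c(G) = 1. -/
theorem allPathInterval_singleton {V : Type*} (G : SimpleGraph V) (a : V) :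
    allPathInterval G {a} = {a} := by
  refine Set.Subset.antisymm ?_ Set.subset_union_left
  rintro v (hv | ⟨u, rfl, w, rfl, p, hp, hv⟩)
  · exact hv
  · rw [SimpleGraph.Walk.isPath_iff_eq_nil.mp hp] at hv
    simpa using hv

theorem TwoConnected.eq_univ_of_convex {V : Type*} {G : SimpleGraph V} (hG : TwoConnected G)
    {S : Set V} (hS : allPathInterval G S = S) (hnt : S.Nontrivial) : S = Set.univ := by
  classical
  by_contra hne
  obtain ⟨y, hy⟩ := (Set.ne_univ_iff_exists_notMem S).mp hne
  obtain ⟨x, hx⟩ := hnt.nonempty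
  obtain ⟨q⟩ := hG.1.preconnected x y
  obtain ⟨d, -, hs, hv⟩ := q.exists_boundary_dart S hx hy
  obtain ⟨t, ht, hts⟩ := hnt.exists_ne d.fst
  obtain ⟨r⟩ := (hG.2 d.fst).preconnected ⟨d.snd, d.adj.ne'⟩ ⟨t, hts⟩
  let p := r.toPath.1.map (SimpleGraph.Embedding.induce (G := G) ({d.fst}ᶜ : Set V)).toHom
  have hp : p.IsPath :=
    SimpleGraph.Walk.map_isPath_of_injective Subtype.val_injective r.toPath.2
  have hsp : d.fst ∉ p.support := by
    intro h
    obtain ⟨z, -, hz⟩ := List.mem_map.mp ((SimpleGraph.Walk.support_map _ _) ▸ h)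
    exact z.2 hz
  refine hv (hS ▸ Or.inr ⟨d.fst, hs, t, ht, SimpleGraph.Walk.cons d.adj p, hp.cons hsp, ?_⟩)
  exact List.mem_cons_of_mem _ p.start_mem_support

/-- In a 2-connected graph with at least 3 vertices, every convex set with at least
two vertices is the whole vertex set; consequently the convexity number is `c(G) = 1`. -/
theorem twoConnected_convexityNumber {V : Type*} [Fintype V] (G : SimpleGraph V)
    (hG : TwoConnected G) (hcard : 3 ≤ Fintype.card V) :
    (∀ S : Set V, allPathInterval G S = S → 2 ≤ S.ncard → S = Set.univ) ∧
    sSup {n : ℕ | ∃ S : Set V,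
        allPathInterval G S = S ∧ S ≠ Set.univ ∧ S.ncard = n} = 1 := by
  have key : ∀ S : Set V, allPathInterval G S = S → 2 ≤ S.ncard → S = Set.univ :=
    fun S hS h2 => hG.eq_univ_of_convex hS ((Set.one_lt_ncard_iff_nontrivial).mp h2)
  refine ⟨key, IsGreatest.csSup_eq ⟨?_, ?_⟩⟩
  · obtain ⟨a⟩ := hG.1.nonempty
    refine ⟨{a}, allPathInterval_singleton G a, fun h => ?_, Set.ncard_singleton a⟩
    have := congrArg Set.ncard h
    rw [Set.ncard_singleton, Set.ncard_univ, Nat.card_eq_fintype_card] at this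
    omega
  · rintro n ⟨S, hS, hne, rfl⟩
    by_contra! h
    exact hne (key S hS h)
end

section
/- Let G be a finite, simple, 2-connected graph with vertex set V of size at least 3. Then in the all-path convexity, for every pair of distinct vertices u, w of G, the set {u, w} is an interval set, i.e., I({u, w}) = V; consequently the interval number of G is i(G) = 2. -/
namespace SimpleGraph

variable {V : Type*} {G : SimpleGraph V}

/-- A walk ending in `T` can be cut at its first vertex in `T` and shortened to a path. -/
lemma exists_isPath_first_hit (T : Set V) {a b : V} (q : G.Walk a b) (hb : b ∈ T) :
    ∃ x ∈ T, ∃ r : G.Walk a x, r.IsPath ∧ r.support ⊆ q.support ∧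
      ∀ y ∈ r.support, y ∈ T → y = x := by
  classical
  suffices h : ∃ x ∈ T, ∃ r : G.Walk a x, r.support ⊆ q.support ∧
      ∀ y ∈ r.support, y ∈ T → y = x by
    obtain ⟨x, hx, r, hr, hr'⟩ := h
    exact ⟨x, hx, r.bypass, r.bypass_isPath, fun y hy => hr (r.support_bypass_subset_support hy),
      fun y hy => hr' y (r.support_bypass_subset_support hy)⟩
  induction q with
  | nil => exact ⟨_, hb, .nil, by simp, by simp⟩
  | @cons a c b h q ih =>
    by_cases ha : a ∈ T
    · exact ⟨a, ha, .nil, by simp, by simp⟩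
    · obtain ⟨x, hx, r, hr, hr'⟩ := ih hb
      refine ⟨x, hx, .cons h r, ?_, ?_⟩
      · rw [Walk.support_cons, Walk.support_cons]
        exact List.cons_subset_cons a hr
      · intro y hy hyT
        rcases List.mem_cons.1 (by simpa using hy) with rfl | hy
        · exact absurd hyT ha
        · exact hr' y hy hyT

lemma Walk.IsPath.append_of_inter {a b c : V} {p : G.Walk a b} {q : G.Walk b c}
    (hp : p.IsPath) (hq : q.IsPath) (h : ∀ y ∈ p.support, y ∈ q.support → y = b) :
    (p.append q).IsPath := by
  have hq' := hq.support_nodup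
  rw [← Walk.cons_tail_support, List.nodup_cons] at hq'
  rw [Walk.isPath_def, Walk.support_append]
  refine List.nodup_append'.2 ⟨hp.support_nodup, hq'.2, fun y hy hy' => ?_⟩
  obtain rfl := h y hy (List.mem_of_mem_tail hy')
  exact hq'.1 hy'

/-- If a path `p` from `u` to `v` and a path `p'` from `v` to `w` meet only in `v`, then a path `r`
from a neighbour `v'` of `v` to a vertex `x ≠ v` of `p'`, otherwise disjoint from both, can be
spliced in. -/
lemma exists_isPath_splice {u v w v' x : V} {p : G.Walk u v} {p' : G.Walk v w}
    (hp : p.IsPath) (hp' : p'.IsPath) (hpp : ∀ y ∈ p.support, y ∈ p'.support → y = v)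
    (hadj : G.Adj v v') {r : G.Walk v' x} (hr : r.IsPath) (hxv : x ≠ v) (hx : x ∈ p'.support)
    (hrp : ∀ y ∈ r.support, y ∈ p.support ∨ y ∈ p'.support → y = x) :
    ∃ s : G.Walk u w, s.IsPath ∧ v' ∈ s.support := by
  classical
  have hsub : ∀ y ∈ (p'.dropUntil x hx).support, y ∈ p'.support :=
    fun y hy => p'.support_dropUntil_subset_support hx hy
  -- `v` is the first vertex of `p'`, so it is not on the part of `p'` from `x` on.
  have hvd : v ∉ (p'.dropUntil x hx).support := by
    intro hv
    have h := hp'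
    rw [← p'.take_spec hx] at h
    have hn := (Walk.isPath_def _).1 h
    rw [Walk.support_append] at hn
    have hdisj := (List.nodup_append'.1 hn).2.2
    rw [← Walk.cons_tail_support, List.mem_cons] at hv
    rcases hv with hv | hv
    · exact hxv hv.symm
    · exact hdisj (Walk.start_mem_support _) hv
  have hxp : x ∉ p.support := fun h => hxv (hpp x h hx)
  have h1 : (r.append (p'.dropUntil x hx)).IsPath :=
    hr.append_of_inter (hp'.dropUntil hx) fun y hy hy' => hrp y hy (.inr (hsub y hy'))
  have hdis : ∀ y ∈ p.support, y ∉ (r.append (p'.dropUntil x hx)).support := by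
    intro y hy hy'
    rcases (Walk.mem_support_append_iff _ _).1 hy' with h | h
    · exact hxp (hrp y h (.inl hy) ▸ hy)
    · exact hvd (hpp y hy (hsub y h) ▸ h)
  have h2 : (Walk.cons hadj (r.append (p'.dropUntil x hx))).IsPath :=
    h1.cons (hdis v p.end_mem_support)
  refine ⟨p.append (.cons hadj (r.append (p'.dropUntil x hx))),
    hp.append_of_inter h2 fun y hy hy' => ?_, ?_⟩
  · rw [Walk.support_cons, List.mem_cons] at hy'
    exact hy'.resolve_right (hdis y hy)
  · simp [Walk.mem_support_append_iff]

lemma exists_isPath_through_of_adj (h2 : ∀ z : V, (G.induce ({z}ᶜ : Set V)).Connected)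
    {u w v v' : V} (huw : u ≠ w) (hadj : G.Adj v v')
    (hv : ∃ p : G.Walk u w, p.IsPath ∧ v ∈ p.support) :
    ∃ p : G.Walk u w, p.IsPath ∧ v' ∈ p.support := by
  classical
  obtain ⟨p, hp, hv⟩ := hv
  obtain ⟨b, hbp, hbv⟩ : ∃ b ∈ p.support, b ≠ v := by
    by_cases h : u = v
    · exact ⟨w, p.end_mem_support, fun h' => huw (h.trans h'.symm)⟩
    · exact ⟨u, p.start_mem_support, h⟩
  obtain ⟨q⟩ := (h2 v).preconnected ⟨v', hadj.ne'⟩ ⟨b, hbv⟩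
  have hq : ∀ y ∈ (q.map (Embedding.induce _).toHom).support, y ≠ v := by
    intro y hy
    rw [Walk.support_map, List.mem_map] at hy
    obtain ⟨z, -, rfl⟩ := hy
    exact z.2
  obtain ⟨x, hx, r, hr, hrq, hrx⟩ :=
    exists_isPath_first_hit {y | y ∈ p.support} (q.map (Embedding.induce _).toHom) hbp
  have hxv : x ≠ v := hq x (hrq r.end_mem_support)
  have hsplit : ∀ y, y ∈ p.support ↔
      y ∈ (p.takeUntil v hv).support ∨ y ∈ (p.dropUntil v hv).support := fun y => by
    rw [← Walk.mem_support_append_iff, p.take_spec hv]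
  have hpp : ∀ y ∈ (p.takeUntil v hv).support, y ∈ (p.dropUntil v hv).support → y = v := by
    intro y hy hy'
    have hn := hp.support_nodup
    rw [← p.take_spec hv, Walk.support_append] at hn
    rw [← Walk.cons_tail_support, List.mem_cons] at hy'
    exact hy'.resolve_right fun h => (List.nodup_append'.1 hn).2.2 hy h
  rcases (hsplit x).1 hx with hx | hx
  · -- `x` precedes `v` on `p`: splice into the reversed path.
    obtain ⟨s, hs, hs'⟩ := exists_isPath_splice (p := (p.dropUntil v hv).reverse)
      (p' := (p.takeUntil v hv).reverse) (hp.dropUntil hv).reverse (hp.takeUntil hv).reverse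
      (by simpa using fun y hy hy' => hpp y hy' hy) hadj hr hxv (by simpa using hx)
      (fun y hy h => hrx y hy ((hsplit y).2 (by simpa using h.symm)))
    exact ⟨s.reverse, hs.reverse, by simpa using hs'⟩
  · exact exists_isPath_splice (hp.takeUntil hv) (hp.dropUntil hv) hpp hadj hr hxv hx
      fun y hy h => hrx y hy ((hsplit y).2 h)

lemma exists_isPath_through (hG : TwoConnected G) {u w : V} (huw : u ≠ w) (v : V) :
    ∃ p : G.Walk u w, p.IsPath ∧ v ∈ p.support := by
  classical
  obtain ⟨q⟩ := hG.1.preconnected u v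
  have key : ∀ {a b : V}, G.Walk a b → (∃ p : G.Walk u w, p.IsPath ∧ a ∈ p.support) →
      ∃ p : G.Walk u w, p.IsPath ∧ b ∈ p.support := by
    intro a b q
    induction q with
    | nil => exact id
    | cons h _ ih => exact fun ha => ih (exists_isPath_through_of_adj hG.2 huw h ha)
  obtain ⟨p⟩ := hG.1.preconnected u w
  exact key q ⟨p.bypass, p.bypass_isPath, Walk.start_mem_support _⟩

end SimpleGraph

lemma allPathInterval_subset_of_subsingleton {V : Type*} (G : SimpleGraph V) {S : Set V}
    (hS : S.Subsingleton) : allPathInterval G S ⊆ S := by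
  rintro v (hv | ⟨u, hu, w, hw, p, hp, hv⟩)
  · exact hv
  · obtain rfl := hS hu hw
    rw [(SimpleGraph.Walk.isPath_iff_nil.1 hp).eq_nil] at hv
    simpa [show v = u by simpa using hv] using hu

/-- In a 2-connected graph with at least 3 vertices, every pair of distinct vertices
is an interval set; consequently the interval number is `i(G) = 2`. -/
theorem twoConnected_intervalNumber {V : Type*} [Fintype V] (G : SimpleGraph V)
    (hG : TwoConnected G) (hcard : 3 ≤ Fintype.card V) :
    (∀ u w : V, u ≠ w → allPathInterval G ({u, w} : Set V) = Set.univ) ∧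
    sInf {n : ℕ | ∃ S : Set V, S.ncard = n ∧ allPathInterval G S = Set.univ} = 2 := by
  have hpair : ∀ u w : V, u ≠ w → allPathInterval G ({u, w} : Set V) = Set.univ := by
    intro u w huw
    refine Set.eq_univ_of_forall fun v => .inr ⟨u, by simp, w, by simp, ?_⟩
    exact SimpleGraph.exists_isPath_through hG huw v
  refine ⟨hpair, ?_⟩
  obtain ⟨u, w, huw⟩ := Fintype.one_lt_card_iff.1 (show 1 < Fintype.card V by omega)
  have hmem : 2 ∈ {n : ℕ | ∃ S : Set V, S.ncard = n ∧ allPathInterval G S = Set.univ} :=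
    ⟨{u, w}, Set.ncard_pair huw, hpair u w huw⟩
  refine le_antisymm (Nat.sInf_le hmem) (le_csInf ⟨2, hmem⟩ ?_)
  rintro n ⟨S, rfl, hS⟩
  by_contra! hlt
  have hsub : S.Subsingleton := fun a ha b hb =>
    (Set.ncard_le_one (Set.toFinite S)).1 (by omega) a ha b hb
  have huniv : ∀ v, v ∈ S := fun v =>
    allPathInterval_subset_of_subsingleton G hsub (hS ▸ Set.mem_univ v)
  exact huw (hsub (huniv u) (huniv w))
end

section
/- Let G be a finite, simple, connected graph with vertex set V, let S ⊆ V and let v ∈ V \ S. Then v ∈ I(S) if and only if there exist distinct vertices u, w ∈ S such that no vertex z ≠ v separates v and {u, w} (i.e., for every vertex z ∉ {v}, after deleting z from G the vertex v remains in the same connected component as u or as w). -/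
open SimpleGraph

section Helpers

variable {V : Type*} {G : SimpleGraph V}

lemma isPath_append_iff_inter {a b c : V} (p : G.Walk a b) (q : G.Walk b c) :
    (p.append q).IsPath ↔
      p.IsPath ∧ q.IsPath ∧ ∀ x ∈ p.support, x ∈ q.support → x = b := by
  induction p with
  | nil => simp
  | cons h p ih =>
    simp only [Walk.cons_append, Walk.cons_isPath_iff, ih q, Walk.mem_support_append_iff,
      Walk.support_cons, List.mem_cons]
    have := q.start_mem_support
    have := p.end_mem_support
    grind

/-- A walk ending in `T` can be cut at its first vertex in `T` and shortened to a path. -/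
lemma exists_isPath_first_mem_s10 (T : Set V) {a b : V} (r : G.Walk a b) (hb : b ∈ T) :
    ∃ y ∈ T, ∃ r' : G.Walk a y, r'.IsPath ∧ r'.support ⊆ r.support ∧
      ∀ x ∈ r'.support, x ∈ T → x = y := by
  classical
  suffices h : ∃ y ∈ T, ∃ r' : G.Walk a y, r'.support ⊆ r.support ∧
      ∀ x ∈ r'.support, x ∈ T → x = y by
    obtain ⟨y, hy, r', hs, hT⟩ := h
    exact ⟨y, hy, r'.bypass, r'.bypass_isPath, fun _ hx => hs (r'.support_bypass_subset_support hx),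
      fun x hx => hT x (r'.support_bypass_subset_support hx)⟩
  induction r with
  | nil => exact ⟨_, hb, .nil, by simp, by simp⟩
  | @cons a c b h r ih =>
    by_cases ha : a ∈ T
    · exact ⟨a, ha, .nil, by simp, by simp⟩
    · obtain ⟨y, hy, r', hs, hT⟩ := ih hb
      exact ⟨y, hy, .cons h r', by
        rw [Walk.support_cons, Walk.support_cons]
        exact List.cons_subset_cons _ hs,
        by simpa [ha] using hT⟩

/-- The rerouting step when the detour `r` from `a` meets the path before its vertex `b`. -/
lemma isPath_reroute_before {u y b w a : V} (A : G.Walk u y) (B : G.Walk y b) (D : G.Walk b w)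
    (h : G.Adj a b) (hQ : (A.append (B.append D)).IsPath) (hyb : y ≠ b)
    (ha : a ∉ (A.append (B.append D)).support) (r : G.Walk a y) (hr : r.IsPath)
    (hrQ : ∀ x ∈ r.support, x ∈ (A.append (B.append D)).support → x = y) :
    (A.append (r.reverse.append (.cons h D))).IsPath := by
  have := B.start_mem_support
  have := D.start_mem_support
  have := B.end_mem_support
  have := r.start_mem_support
  simp only [isPath_append_iff_inter, Walk.mem_support_append_iff, Walk.cons_isPath_iff,
    Walk.isPath_reverse_iff, Walk.support_cons, Walk.support_reverse, List.mem_reverse,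
    List.mem_cons] at *
  grind

lemma exists_isPath_reroute {u w a b y : V} (Q : G.Walk u w) (hQ : Q.IsPath)
    (hb : b ∈ Q.support) (h : G.Adj a b) (r : G.Walk a y) (hy : y ∈ Q.support)
    (hrb : b ∉ r.support) : ∃ p : G.Walk u w, p.IsPath ∧ a ∈ p.support := by
  by_cases ha : a ∈ Q.support
  · exact ⟨Q, hQ, ha⟩
  obtain ⟨y, hy, r', hr', hs, hT⟩ := exists_isPath_first_mem_s10 {x | x ∈ Q.support} r hy
  simp only [Set.mem_ofPred_eq] at hy hT
  have hyb : y ≠ b := by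
    rintro rfl
    exact hrb (hs r'.end_mem_support)
  obtain ⟨P, D, rfl⟩ := Walk.mem_support_iff_exists_append.1 hb
  rcases (Walk.mem_support_append_iff _ _).1 hy with hy' | hy'
  · obtain ⟨A, B, rfl⟩ := Walk.mem_support_iff_exists_append.1 hy'
    rw [← Walk.append_assoc] at hQ ha hT
    exact ⟨_, isPath_reroute_before A B D h hQ hyb ha r' hr' hT, by simp⟩
  -- the detour meets `Q` after `b`: reverse `Q`
  · obtain ⟨B, A, rfl⟩ := Walk.mem_support_iff_exists_append.1 hy'
    have key := isPath_reroute_before A.reverse B.reverse P.reverse h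
      (by simpa [← Walk.reverse_append, ← Walk.append_assoc] using hQ) hyb
      (by simpa [or_comm, or_assoc, or_left_comm] using ha) r' hr'
      (by
        intro x hx hx'
        refine hT x hx ?_
        simp only [Walk.mem_support_append_iff, Walk.support_reverse, List.mem_reverse] at hx' ⊢
        tauto)
    exact ⟨_, key.reverse, by simp⟩

/-- A vertex which no other vertex separates from `{u, w}` lies on a `u`-`w` path. The induction is
on a path `p` from that vertex to `{u, w}`. -/
lemma exists_isPath_through (hG : G.Connected) {u w a b : V} (p : G.Walk a b) (hp : p.IsPath)
    (hb : b = u ∨ b = w)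
    (H : ∀ z ≠ a, ∃ x, (x = u ∨ x = w) ∧ ∃ q : G.Walk a x, z ∉ q.support) :
    ∃ p : G.Walk u w, p.IsPath ∧ a ∈ p.support := by
  induction p with
  | nil =>
    obtain ⟨q, hq⟩ := (hG.preconnected u w).exists_isPath
    rcases hb with rfl | rfl
    · exact ⟨q, hq, q.start_mem_support⟩
    · exact ⟨q, hq, q.end_mem_support⟩
  | @cons a c b h p ih =>
    rw [Walk.cons_isPath_iff] at hp
    obtain ⟨Q, hQ, hc⟩ := ih hp.1 hb (by
      intro z hz
      by_cases hza : z = a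
      · exact ⟨b, hb, p, hza ▸ hp.2⟩
      · obtain ⟨x, hx, q, hq⟩ := H z hza
        exact ⟨x, hx, .cons h.symm q, by simp [hz, hq]⟩)
    obtain ⟨x, hx, r, hr⟩ := H c h.ne'
    refine exists_isPath_reroute Q hQ hc h r ?_ hr
    rcases hx with rfl | rfl <;> simp

lemma reachable_induce_compl_iff {a x z : V} (ha : a ∈ ({z}ᶜ : Set V)) (hx : x ∈ ({z}ᶜ : Set V)) :
    (G.induce ({z}ᶜ : Set V)).Reachable ⟨a, ha⟩ ⟨x, hx⟩ ↔ ∃ q : G.Walk a x, z ∉ q.support := by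
  constructor
  · rintro ⟨q⟩
    refine ⟨q.map (Embedding.induce _).toHom, ?_⟩
    intro hz
    obtain ⟨⟨y, hy⟩, -, hyz⟩ :=
      List.mem_map.1 ((Walk.support_map (Embedding.induce _).toHom q) ▸ hz)
    exact hy hyz
  · rintro ⟨q, hq⟩
    exact ⟨q.induce _ fun y hy => by
      rintro rfl
      exact hq hy⟩

end Helpers

/-- For `v ∉ S`, `v ∈ I(S)` iff there exist distinct `u, w ∈ S` such that no vertex
`z ≠ v` separates `v` and `{u, w}`: for every `z ≠ v`, after deleting `z`, the
vertex `v` remains in the same connected component as `u` or as `w`. -/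
theorem mem_interval_iff_no_separator {V : Type*} [Fintype V] (G : SimpleGraph V)
    (hG : G.Connected) (S : Set V) (v : V) (hv : v ∉ S) :
    v ∈ allPathInterval G S ↔
      ∃ u ∈ S, ∃ w ∈ S, u ≠ w ∧
        ∀ (z : V) (hzv : z ≠ v),
          ∃ x, (x = u ∨ x = w) ∧ ∃ hxz : x ≠ z,
            (G.induce ({z}ᶜ : Set V)).Reachable
              ⟨v, by simpa using hzv.symm⟩ ⟨x, by simpa using hxz⟩ := by
  simp only [reachable_induce_compl_iff]
  constructor
  · rintro (h | ⟨u, hu, w, hw, p, hp, hvp⟩)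
    · exact absurd h hv
    refine ⟨u, hu, w, hw, ?_, fun z hz => ?_⟩
    -- a closed path is trivial, so `u = w` would force `v = u ∈ S`
    · rintro rfl
      rw [Walk.isPath_iff_eq_nil.1 hp] at hvp
      simp only [Walk.support_nil, List.mem_singleton] at hvp
      exact hv (hvp ▸ hu)
    -- the two halves of `p` at `v` share only `v`, so `z` misses one of them
    · obtain ⟨q, r, rfl⟩ := Walk.mem_support_iff_exists_append.1 hvp
      have hd := ((isPath_append_iff_inter q r).1 hp).2.2 z
      by_cases hzq : z ∈ q.support
      · have hzr : z ∉ r.support := fun h => hz (hd hzq h)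
        exact ⟨w, .inr rfl, fun h => hzr (h ▸ r.end_mem_support), r, hzr⟩
      · exact ⟨u, .inl rfl, fun h => hzq (h ▸ q.start_mem_support), q.reverse, by simpa using hzq⟩
  · rintro ⟨u, hu, w, hw, -, H⟩
    obtain ⟨p, hp⟩ := (hG.preconnected v u).exists_isPath
    obtain ⟨q, hq, hvq⟩ := exists_isPath_through hG (w := w) p hp (.inl rfl) fun z hz => by
      obtain ⟨x, hx, -, q, hq⟩ := H z hz
      exact ⟨x, hx, q, hq⟩
    exact .inr ⟨u, hu, w, hw, q, hq, hvq⟩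
end

section
/- Let G be a finite, simple, connected graph with vertex set V, let z be a cut vertex of G (i.e., the graph G − z obtained by deleting z is disconnected), and let C be the vertex set of a connected component of G − z. Then the set V \ C is convex in the all-path convexity. -/
/-- The hypothesis `hC` says that the only edges of `G` leaving `C` lead to `z`. -/
lemma mem_support_of_walk_leaves {V : Type*} {G : SimpleGraph V} {z : V} {C : Set V}
    (hC : ∀ a b, a ∈ C → G.Adj a b → b ≠ z → b ∈ C) {a b : V} (p : G.Walk a b)
    (ha : a ∈ C) (hb : b ∉ C) : z ∈ p.support := by
  induction p with
  | nil => exact absurd ha hb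
  | @cons a x b h q ih =>
    rw [SimpleGraph.Walk.support_cons]
    by_cases hx : x = z
    · subst hx
      exact List.mem_cons_of_mem _ q.start_mem_support
    · exact List.mem_cons_of_mem _ (ih (hC _ _ ha h hx) hb)

/-- If `z` is a cut vertex of `G` and `C` is the vertex set of a connected component
of `G - z`, then `V \ C` is convex in the all-path convexity. -/
theorem compl_component_convex {V : Type*} [Fintype V] (G : SimpleGraph V)
    (hG : G.Connected) (z : V)
    (hz : ¬ (G.induce ({z}ᶜ : Set V)).Connected)
    (c : (G.induce ({z}ᶜ : Set V)).ConnectedComponent) (C : Set V)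
    (hC : C = Subtype.val ''
      {x | (G.induce ({z}ᶜ : Set V)).connectedComponentMk x = c}) :
    allPathInterval G (Set.univ \ C) = Set.univ \ C := by
  classical
  have hzC : z ∉ C := by
    rw [hC]
    rintro ⟨x, -, hx⟩
    exact x.2 hx
  have hstep : ∀ a b, a ∈ C → G.Adj a b → b ≠ z → b ∈ C := by
    rw [hC]
    rintro _ b ⟨x, hx, rfl⟩ hab hb
    refine ⟨⟨b, hb⟩, ?_, rfl⟩
    have hadj : (G.induce ({z}ᶜ : Set V)).Adj ⟨b, hb⟩ x := hab.symm
    exact (SimpleGraph.ConnectedComponent.eq.2 hadj.reachable).trans hx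
  refine Set.Subset.antisymm ?_ Set.subset_union_left
  rintro v (hv | ⟨u, hu, w, hw, p, hp, hvp⟩)
  · exact hv
  · refine ⟨Set.mem_univ _, fun hvC => ?_⟩
    have h1 : z ∈ (p.takeUntil v hvp).support := by
      simpa using mem_support_of_walk_leaves hstep (p.takeUntil v hvp).reverse hvC hu.2
    have h2 : z ∈ (p.dropUntil v hvp).support :=
      mem_support_of_walk_leaves hstep (p.dropUntil v hvp) hvC hw.2
    -- Only the tail of the second part is disjoint from the first, since both contain `v`.
    have h3 : z ∈ (p.dropUntil v hvp).support.tail := by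
      rw [SimpleGraph.Walk.mem_support_iff] at h2
      exact h2.resolve_left fun h => hzC (h ▸ hvC)
    have hnd := hp.support_nodup
    rw [← p.take_spec hvp, SimpleGraph.Walk.support_append] at hnd
    exact List.disjoint_of_nodup_append hnd h1 h3
end
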